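/- arXiv:2604.03152 — 2 statements merged into one kernel-verified Lean document; each statement's English description precedes it below -/
import Mathlib

section
/- Let β > 1, let U be a finite universe of n ≥ 1 elements, let F be a finite family of subsets of U, and let lev assign a natural-number level lev(e) to each element e ∈ U such that for every s ∈ F and every natural number j ≤ log_β n one has |{e ∈ s : lev(e) < j}| < β^j. Then for every subfamily {s_1, …, s_k} ⊆ F whose union contains U, Σ_{e ∈ U} β^{-lev(e)} ≤ k·β·(ln n + 1). -/
/-!
Order a set `s` of the cover by level. If its `i`-th element has level `k`, then `i ≤ β ^ (k + 1)`:
this is the hypothesis when `k + 1 ≤ log_β n`, and otherwise `i ≤ n < β ^ (k + 1)`. So that element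
has weight `β ^ (-k) ≤ β / i`, and `s` has total weight at most `β` times the harmonic number of
`|s|`. Summing over the sets of a cover bounds the weight of the universe.
-/

theorem monotone_harmonic : Monotone harmonic :=
  monotone_nat_of_le_succ fun n => by
    rw [harmonic_succ]
    exact le_add_of_nonneg_right (by positivity)

theorem harmonic_le_one_add_log_of_le {m n : ℕ} (h : m ≤ n) :
    (harmonic m : ℝ) ≤ 1 + Real.log n :=
  (Rat.cast_le.2 (monotone_harmonic h)).trans (harmonic_le_one_add_log n)

theorem le_pow_of_le_of_le_logb_imp {β x c : ℝ} (hβ : 1 < β) (hx : 0 < x) (hc : c ≤ x) {j : ℕ}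
    (h : (j : ℝ) ≤ Real.logb β x → c ≤ β ^ j) : c ≤ β ^ j := by
  rcases le_or_gt (j : ℝ) (Real.logb β x) with hj | hj
  · exact h hj
  · rw [Real.logb_lt_iff_lt_rpow hβ hx, Real.rpow_natCast] at hj
    exact hc.trans hj.le

section WeightSums

open Finset

theorem sum_biUnion_le_sum_sum {ι α M : Type*} [DecidableEq α]
    [AddCommMonoid M] [PartialOrder M] [IsOrderedAddMonoid M] {f : α → M} (hf : ∀ x, 0 ≤ f x)
    (t : Finset ι) (s : ι → Finset α) :
    ∑ x ∈ t.biUnion s, f x ≤ ∑ i ∈ t, ∑ x ∈ s i, f x := by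
  have sum_union_le (a b : Finset α) : ∑ x ∈ a ∪ b, f x ≤ ∑ x ∈ a, f x + ∑ x ∈ b, f x := by
    rw [← sum_union_inter]
    exact le_add_of_nonneg_right (sum_nonneg fun x _ => hf x)
  rw [← sup_eq_biUnion]
  exact apply_sup_le_sum (f := fun a => ∑ x ∈ a, f x) sum_empty (sum_union_le _ _) t

variable {α K : Type*} [Field K] [LinearOrder K] [IsStrictOrderedRing K]

theorem sum_le_mul_harmonic_of_card_filter_le_mul_le {ι : Type*} [LinearOrder ι] {f : α → ι}
    {w : α → K} {b : K} {s : Finset α} (hw : ∀ e ∈ s, 0 ≤ w e)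
    (h : ∀ e ∈ s, (#{x ∈ s | f x ≤ f e} : K) * w e ≤ b) :
    ∑ e ∈ s, w e ≤ b * harmonic #s := by
  classical
  induction s using induction_on_max_value f with
  | empty => simp
  | insert a s ha hmax ih =>
    have hrest : ∑ e ∈ s, w e ≤ b * harmonic #s := by
      refine ih (fun e he => hw e (mem_insert_of_mem he)) fun e he => ?_
      have hwe := hw e (mem_insert_of_mem he)
      refine le_trans ?_ (h e (mem_insert_of_mem he))
      gcongr
      exact subset_insert a s
    have hlast : w a ≤ b * ((#s : K) + 1)⁻¹ := by
      have hall := h a (mem_insert_self a s)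
      have hmax' : ∀ x ∈ insert a s, f x ≤ f a := (forall_mem_insert ..).2 ⟨le_rfl, hmax⟩
      rw [filter_true_of_mem hmax', card_insert_of_notMem ha, Nat.cast_succ, mul_comm] at hall
      rwa [← div_eq_mul_inv, le_div_iff₀ (by positivity)]
    calc ∑ e ∈ insert a s, w e
        = w a + ∑ e ∈ s, w e := sum_insert ha
      _ ≤ b * ((#s : K) + 1)⁻¹ + b * harmonic #s := add_le_add hlast hrest
      _ = b * harmonic #(insert a s) := by
        rw [card_insert_of_notMem ha, harmonic_succ]
        push_cast
        ring

theorem sum_zpow_neg_le_mul_harmonic {β : K} (hβ : 0 < β) {lev : α → ℕ} {s : Finset α}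
    (h : ∀ j : ℕ, (#{e ∈ s | lev e < j} : K) ≤ β ^ j) :
    ∑ e ∈ s, β ^ (-(lev e : ℤ)) ≤ β * harmonic #s := by
  refine sum_le_mul_harmonic_of_card_filter_le_mul_le (f := lev) (fun e _ => by positivity)
    fun e _ => ?_
  calc (#{x ∈ s | lev x ≤ lev e} : K) * β ^ (-(lev e : ℤ))
      ≤ β ^ (lev e + 1) * β ^ (-(lev e : ℤ)) := by
        gcongr
        simpa only [Nat.lt_succ_iff] using h (lev e + 1)
    _ = β := by
        rw [zpow_neg, zpow_natCast, pow_succ']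
        exact mul_inv_cancel_right₀ (by positivity) β

theorem sum_zpow_neg_le_mul_log_add_one {β : ℝ} (hβ : 1 < β) {n : ℕ} (hn : 0 < n) {lev : α → ℕ}
    {s : Finset α} (hs : #s ≤ n)
    (h : ∀ j : ℕ, (j : ℝ) ≤ Real.logb β n → (#{e ∈ s | lev e < j} : ℝ) ≤ β ^ j) :
    ∑ e ∈ s, β ^ (-(lev e : ℤ)) ≤ β * (Real.log n + 1) := by
  have hβ₀ : 0 < β := one_pos.trans hβ
  have hcard (j : ℕ) : (#{e ∈ s | lev e < j} : ℝ) ≤ β ^ j :=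
    le_pow_of_le_of_le_logb_imp hβ (Nat.cast_pos.2 hn)
      (Nat.cast_le.2 ((card_filter_le _ _).trans hs)) (h j)
  calc ∑ e ∈ s, β ^ (-(lev e : ℤ))
      ≤ β * harmonic #s := sum_zpow_neg_le_mul_harmonic hβ₀ hcard
    _ ≤ β * (Real.log n + 1) := by
      rw [add_comm]
      gcongr
      exact harmonic_le_one_add_log_of_le hs

end WeightSums

/-- Let `β > 1`, `U` a finite universe of `n ≥ 1` elements, `F` a finite
family of subsets of `U`, and `lev : α → ℕ` a level function such that for every `s ∈ F`
and every natural `j ≤ log_β n`, `|{e ∈ s : lev e < j}| < β ^ j`. Then for every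
subfamily of `F` of size `k` whose union contains `U`,
`∑_{e ∈ U} β ^ (-lev e) ≤ k · β · (ln n + 1)`. -/
theorem stmt_4 {α : Type*} [DecidableEq α] (β : ℝ) (hβ : 1 < β)
    (U : Finset α) (F : Finset (Finset α)) (hn : 1 ≤ U.card)
    (hF : ∀ s ∈ F, s ⊆ U)
    (lev : α → ℕ)
    (h2 : ∀ s ∈ F, ∀ j : ℕ, (j : ℝ) ≤ Real.logb β (U.card : ℝ) →
      ((s.filter (fun e => lev e < j)).card : ℝ) < β ^ j) :
    ∀ C' : Finset (Finset α), C' ⊆ F → (∀ e ∈ U, ∃ s ∈ C', e ∈ s) →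
      ∑ e ∈ U, β ^ (-(lev e : ℤ)) ≤ (C'.card : ℝ) * β * (Real.log (U.card : ℝ) + 1) := by
  intro C' hC' hcover
  have weight_nonneg (e : α) : 0 ≤ β ^ (-(lev e : ℤ)) := zpow_nonneg (one_pos.trans hβ).le _
  have weight_le : ∀ s ∈ C', ∑ e ∈ s, β ^ (-(lev e : ℤ)) ≤
      β * (Real.log (U.card : ℝ) + 1) := fun s hs =>
    sum_zpow_neg_le_mul_log_add_one hβ hn (Finset.card_le_card (hF s (hC' hs)))
      fun j hj => (h2 s (hC' hs) j hj).le
  calc ∑ e ∈ U, β ^ (-(lev e : ℤ))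
      ≤ ∑ e ∈ C'.biUnion id, β ^ (-(lev e : ℤ)) :=
        Finset.sum_le_sum_of_subset_of_nonneg
          (fun e he => Finset.mem_biUnion.2 (hcover e he)) fun e _ _ => weight_nonneg e
    _ ≤ ∑ s ∈ C', ∑ e ∈ s, β ^ (-(lev e : ℤ)) :=
        sum_biUnion_le_sum_sum weight_nonneg C' id
    _ ≤ C'.card • (β * (Real.log (U.card : ℝ) + 1)) := Finset.sum_le_card_nsmul _ _ _ weight_le
    _ = (C'.card : ℝ) * β * (Real.log (U.card : ℝ) + 1) := by rw [nsmul_eq_mul, mul_assoc]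
end

section
/- Let β > 1, let U be a finite universe of n ≥ 1 elements and F a finite family of subsets of U. Suppose each element e ∈ U is assigned to a set asn(e) ∈ F containing it, with cov(s) = {e ∈ U : asn(e) = s}, and each set s with cov(s) ≠ ∅ carries a natural-number level lev(s) ≤ ⌈log_β n⌉, with lev(e) = lev(asn(e)) for each e ∈ U. Assume the relaxed invariant: (1') for every s ∈ F with cov(s) ≠ ∅, |cov(s)| ≥ β^{lev(s) - 1}, and (2') for every s ∈ F and every natural number j ≤ log_β n, |{e ∈ s : lev(e) < j}| < β^{j + 1}. Then C = {s ∈ F : cov(s) ≠ ∅} is a set cover of U, and for every subfamily {s_1, …, s_k} ⊆ F that covers U, |C| ≤ β³·(ln n + 1)·k. -/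
/-!
Charge every element `e` the amount `β ^ (1 - lev e)`. By (1') each set of `C` collects at least `1`
from the elements assigned to it, so `|C|` is at most the total charge of `U`. Conversely, list the
elements of a set `s` of an arbitrary cover by increasing level: if `e` comes `i`-th then by (2')
`i ≤ |{x ∈ s : lev x < lev e + 1}| ≤ β ^ (lev e + 2)`, so `e` is charged at most `β³ / i`.
(For `j > log_β n` the bound (2') is automatic, as then `n < β ^ j`.)
Summing over `i`, the set `s` is charged at most `β³ · H_{|s|} ≤ β³ (ln n + 1)`.
-/

open Finset

section Charging

variable {α ι K : Type*} [Field K] [LinearOrder K] [IsStrictOrderedRing K]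

theorem sum_le_mul_harmonic_of_rank_mul_le {γ : Type*} [LinearOrder γ] {s : Finset α} (f : α → γ)
    {w : α → K} {B : K} (hw : ∀ e ∈ s, 0 ≤ w e)
    (hB : ∀ e ∈ s, (#{x ∈ s | f x ≤ f e} : K) * w e ≤ B) :
    ∑ e ∈ s, w e ≤ B * (harmonic #s : K) := by
  classical
  induction s using Finset.induction_on_max_value f with
  | empty => simp
  | insert a s ha hmax ih =>
    have hsum : ∑ e ∈ s, w e ≤ B * (harmonic #s : K) := by
      refine ih (fun e he => hw e (mem_insert_of_mem he)) fun e he =>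
        le_trans ?_ (hB e (mem_insert_of_mem he))
      have := hw e (mem_insert_of_mem he)
      gcongr
      exact subset_insert a s
    have hrank : #{x ∈ insert a s | f x ≤ f a} = #s + 1 := by
      rw [filter_true_of_mem (by simpa using hmax), card_insert_of_notMem ha]
    have hlast : w a ≤ B * ((#s + 1 : ℕ) : K)⁻¹ := by
      rw [← div_eq_mul_inv, le_div_iff₀ (by positivity), mul_comm, ← hrank]
      exact hB a (mem_insert_self a s)
    rw [sum_insert ha, card_insert_of_notMem ha, harmonic_succ, Rat.cast_add, Rat.cast_inv,
      Rat.cast_natCast, mul_add, add_comm]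
    exact add_le_add hsum hlast

theorem sum_zpow_one_sub_le_mul_harmonic {β : K} (hβ : 0 < β) (s : Finset α) (lev : α → ℕ)
    (hcount : ∀ j, (#{e ∈ s | lev e < j} : K) ≤ β ^ (j + 1)) :
    ∑ e ∈ s, β ^ (1 - (lev e : ℤ)) ≤ β ^ 3 * (harmonic #s : K) := by
  refine sum_le_mul_harmonic_of_rank_mul_le lev (fun e _ => by positivity) fun e _ => ?_
  calc (#{x ∈ s | lev x ≤ lev e} : K) * β ^ (1 - (lev e : ℤ))
      ≤ β ^ (lev e + 2) * β ^ (1 - (lev e : ℤ)) := by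
        gcongr
        simpa only [Nat.lt_succ_iff] using hcount (lev e + 1)
    _ = β ^ 3 := by
        rw [← zpow_natCast, ← zpow_natCast, ← zpow_add₀ hβ.ne']
        congr 1
        push_cast
        ring

theorem card_le_sum_zpow_one_sub [DecidableEq ι] {β : K} (hβ : 0 < β) {U : Finset α}
    {C : Finset ι} {asn : α → ι} {lev : ι → ℕ}
    (hfiber : ∀ i ∈ C, β ^ ((lev i : ℤ) - 1) ≤ (#{e ∈ U | asn e = i} : K)) :
    (#C : K) ≤ ∑ e ∈ U, β ^ (1 - (lev (asn e) : ℤ)) := by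
  have one_le_charge : ∀ i ∈ C, 1 ≤ ∑ e ∈ U with asn e = i, β ^ (1 - (lev (asn e) : ℤ)) := by
    intro i hi
    calc (1 : K) = β ^ ((lev i : ℤ) - 1) * β ^ (1 - (lev i : ℤ)) := by
          rw [← zpow_add₀ hβ.ne', sub_add_sub_cancel, sub_self, zpow_zero]
      _ ≤ #{e ∈ U | asn e = i} * β ^ (1 - (lev i : ℤ)) := by
          gcongr
          exact hfiber i hi
      _ = ∑ e ∈ U with asn e = i, β ^ (1 - (lev (asn e) : ℤ)) := by
          rw [← nsmul_eq_mul, ← sum_const]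
          exact sum_congr rfl fun e he => by rw [(mem_filter.1 he).2]
  calc (#C : K) = #C • (1 : K) := (nsmul_one _).symm
    _ ≤ ∑ i ∈ C, ∑ e ∈ U with asn e = i, β ^ (1 - (lev (asn e) : ℤ)) :=
        card_nsmul_le_sum _ _ _ one_le_charge
    _ ≤ ∑ e ∈ U, β ^ (1 - (lev (asn e) : ℤ)) :=
        sum_fiberwise_le_sum_of_sum_fiber_nonneg fun _ _ => sum_nonneg fun _ _ => by positivity

end Charging

theorem sum_le_sum_sum_inter_of_cover {α ι M : Type*} [DecidableEq α] [AddCommMonoid M]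
    [PartialOrder M] [IsOrderedAddMonoid M] {U : Finset α} {I : Finset ι} {S : ι → Finset α}
    {w : α → M} (hw : ∀ e ∈ U, 0 ≤ w e) (hcov : ∀ e ∈ U, ∃ i ∈ I, e ∈ S i) :
    ∑ e ∈ U, w e ≤ ∑ i ∈ I, ∑ e ∈ U ∩ S i, w e := by
  calc ∑ e ∈ U, w e ≤ ∑ e ∈ U, ∑ i ∈ I with e ∈ S i, w e := by
        refine sum_le_sum fun e he => ?_
        obtain ⟨i, hi, hei⟩ := hcov e he
        exact single_le_sum (f := fun _ => w e) (fun _ _ => hw e he) (mem_filter.2 ⟨hi, hei⟩)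
    _ = ∑ i ∈ I, ∑ e ∈ U ∩ S i, w e :=
        sum_comm' fun e i => by simp only [mem_filter, mem_inter]; tauto

theorem card_filter_lt_lt_pow_of_le_logb {α : Type*} {β : ℝ} (hβ : 1 < β) {n : ℕ} (hn : 0 < n)
    {s : Finset α} (hs : #s ≤ n) {lev : α → ℕ}
    (hcount : ∀ j : ℕ, (j : ℝ) ≤ Real.logb β n → (#{e ∈ s | lev e < j} : ℝ) < β ^ (j + 1))
    (j : ℕ) : (#{e ∈ s | lev e < j} : ℝ) < β ^ (j + 1) := by
  rcases le_or_gt (j : ℝ) (Real.logb β n) with hj | hj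
  · exact hcount j hj
  · calc (#{e ∈ s | lev e < j} : ℝ) ≤ n := mod_cast (card_filter_le _ _).trans hs
      _ < β ^ j := by
          rwa [Real.logb_lt_iff_lt_rpow hβ (mod_cast hn), Real.rpow_natCast] at hj
      _ ≤ β ^ (j + 1) := pow_le_pow_right₀ hβ.le j.le_succ

theorem harmonic_le_log_add_one_of_le {m n : ℕ} (hmn : m ≤ n) :
    (harmonic m : ℝ) ≤ Real.log n + 1 := by
  have harmonic_le : harmonic m ≤ harmonic n :=
    sum_le_sum_of_subset_of_nonneg (range_mono hmn) fun _ _ _ => by positivity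
  calc (harmonic m : ℝ) ≤ harmonic n := mod_cast harmonic_le
    _ ≤ Real.log n + 1 := (harmonic_le_one_add_log n).trans_eq (add_comm _ _)

theorem stmt_7_general {α : Type*} [DecidableEq α] {β : ℝ} (hβ : 1 < β)
    {U : Finset α} {F : Finset (Finset α)} (hn : 1 ≤ #U) {asn : α → Finset α}
    (hasn_mem : ∀ e ∈ U, asn e ∈ F) (hasn_in : ∀ e ∈ U, e ∈ asn e) {lev : Finset α → ℕ}
    (h1 : ∀ s ∈ F, {e ∈ U | asn e = s}.Nonempty →
      β ^ ((lev s : ℤ) - 1) ≤ (#{e ∈ U | asn e = s} : ℝ))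
    (h2 : ∀ s ∈ F, ∀ j : ℕ, (j : ℝ) ≤ Real.logb β #U →
      (#{e ∈ U ∩ s | lev (asn e) < j} : ℝ) < β ^ (j + 1))
    {C : Finset (Finset α)} (hC : C = {s ∈ F | {e ∈ U | asn e = s}.Nonempty}) :
    (C ⊆ F ∧ ∀ e ∈ U, ∃ s ∈ C, e ∈ s) ∧
    ∀ C' ⊆ F, (∀ e ∈ U, ∃ s ∈ C', e ∈ s) → (#C : ℝ) ≤ β ^ 3 * (Real.log #U + 1) * #C' := by
  have hβ0 : 0 < β := zero_lt_one.trans hβ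
  have charge_le : ∀ s ∈ F,
      ∑ e ∈ U ∩ s, β ^ (1 - (lev (asn e) : ℤ)) ≤ β ^ 3 * (Real.log #U + 1) := by
    intro s hs
    have hcard : #(U ∩ s) ≤ #U := card_le_card inter_subset_left
    refine (sum_zpow_one_sub_le_mul_harmonic hβ0 _ _ fun j =>
      (card_filter_lt_lt_pow_of_le_logb hβ hn hcard (h2 s hs) j).le).trans ?_
    gcongr
    exact harmonic_le_log_add_one_of_le hcard
  subst hC
  refine ⟨⟨filter_subset _ _, fun e he => ⟨asn e, mem_filter.2 ⟨hasn_mem e he, e, ?_⟩,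
    hasn_in e he⟩⟩, fun C' hC' hcov => ?_⟩
  · exact mem_filter.2 ⟨he, rfl⟩
  · calc (#{s ∈ F | {e ∈ U | asn e = s}.Nonempty} : ℝ)
        ≤ ∑ e ∈ U, β ^ (1 - (lev (asn e) : ℤ)) :=
          card_le_sum_zpow_one_sub hβ0 fun s hs => (mem_filter.1 hs).elim (h1 s)
      _ ≤ ∑ s ∈ C', ∑ e ∈ U ∩ s, β ^ (1 - (lev (asn e) : ℤ)) :=
          sum_le_sum_sum_inter_of_cover (fun _ _ => by positivity) hcov
      _ ≤ #C' • (β ^ 3 * (Real.log #U + 1)) :=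
          sum_le_card_nsmul _ _ _ fun s hs => charge_le s (hC' hs)
      _ = β ^ 3 * (Real.log #U + 1) * #C' := by rw [nsmul_eq_mul, mul_comm]

/-- approximation of the "local" algorithm's relaxed invariant. Let
`β > 1`, `U` a finite universe of `n ≥ 1` elements and `F` a finite family of subsets of
`U`, with an assignment `asn`, covers `cov s = {e ∈ U : asn e = s}`, and levels
`lev s ≤ ⌈log_β n⌉` for sets with nonempty `cov` (elements inheriting
`lev e = lev (asn e)`), satisfying the relaxed invariant:
(1') `|cov s| ≥ β ^ (lev s - 1)` for every `s` with `cov s ≠ ∅`, and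
(2') `|{e ∈ s : lev e < j}| < β ^ (j + 1)` for every `s ∈ F` and natural `j ≤ log_β n`.
Then `C = {s ∈ F : cov s ≠ ∅}` is a set cover of `U`, and for every subfamily of `F`
covering `U` of size `k`, `|C| ≤ β³·(ln n + 1)·k`. -/
theorem stmt_7 {α : Type*} [DecidableEq α] (β : ℝ) (hβ : 1 < β)
    (U : Finset α) (F : Finset (Finset α)) (hn : 1 ≤ U.card)
    (hF : ∀ s ∈ F, s ⊆ U)
    (asn : α → Finset α)
    (hasn_mem : ∀ e ∈ U, asn e ∈ F) (hasn_in : ∀ e ∈ U, e ∈ asn e)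
    (lev : Finset α → ℕ)
    (hlev_ub : ∀ s ∈ F, (U.filter (fun e => asn e = s)).Nonempty →
      lev s ≤ ⌈Real.logb β (U.card : ℝ)⌉₊)
    (h1 : ∀ s ∈ F, (U.filter (fun e => asn e = s)).Nonempty →
      β ^ ((lev s : ℤ) - 1) ≤ ((U.filter (fun e => asn e = s)).card : ℝ))
    (h2 : ∀ s ∈ F, ∀ j : ℕ, (j : ℝ) ≤ Real.logb β (U.card : ℝ) →
      ((s.filter (fun e => lev (asn e) < j)).card : ℝ) < β ^ (j + 1))
    (C : Finset (Finset α))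
    (hC : C = F.filter (fun s => (U.filter (fun e => asn e = s)).Nonempty)) :
    (C ⊆ F ∧ ∀ e ∈ U, ∃ s ∈ C, e ∈ s) ∧
    (∀ C' : Finset (Finset α), C' ⊆ F → (∀ e ∈ U, ∃ s ∈ C', e ∈ s) →
      (C.card : ℝ) ≤ β ^ 3 * (Real.log (U.card : ℝ) + 1) * C'.card) :=
  stmt_7_general hβ hn hasn_mem hasn_in h1
    (fun s hs => by simpa only [inter_eq_right.2 (hF s hs)] using h2 s hs) hC
end
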